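/- Let χ : K^× → ℤ/2ℤ be a group homomorphism and n ≥ 1 an integer such that χ vanishes on U_{n+1} but does not vanish identically on U_n. Suppose 1 ≤ v(e₁ − e₂) ≤ 2n − 1 and χ(e₁) = χ(e₂) = 0. Then there exists x ∈ K ∖ {0, e₁, e₂} with χ(x) = 1 and χ(x − e₁) + χ(x − e₂) = 1; in particular χ(x(x−e₁)(x−e₂)) = 0. -/

import Mathlib

/-- An additively written, normalized (i.e. surjective onto `ℤ`) discrete
valuation on a field `K`.  All axioms are imposed at nonzero arguments only,
so the value of `v` at `0` is irrelevant.  For a finite extension `K` of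
`ℚ_[p]`, the normalized valuation `v : K^× → ℤ` of the paper is such a
structure. -/
structure DValuation (K : Type*) [Field K] where
  /-- the valuation map -/
  v : K → ℤ
  v_mul : ∀ ⦃x y : K⦄, x ≠ 0 → y ≠ 0 → v (x * y) = v x + v y
  min_le_v_add : ∀ ⦃x y : K⦄, x ≠ 0 → y ≠ 0 → x + y ≠ 0 → min (v x) (v y) ≤ v (x + y)
  v_surj : ∀ m : ℤ, ∃ x : K, x ≠ 0 ∧ v x = m

namespace DValuation

variable {K : Type*} [Field K] (w : DValuation K)

/-- `u ∈ U_m` : `u` is (a unit) congruent to `1` modulo `𝔭^m`; for `m ≥ 1`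
this forces `v u = 0`, i.e. `u ∈ 𝔬^×`. -/
def IsUnit₁ (m : ℤ) (u : K) : Prop :=
  u = 1 ∨ m ≤ w.v (u - 1)

end DValuation

/-!
Pick `u ∈ U_n` with `χ(u) = 1`; then `v(u - 1) = n`. Put `b = (e₂ - e₁) / (u - 1)` and look for `x`
in the set `e₂ + b U₁`. If `x = e₂ + b r` with `r ∈ U₁`, then `(x - e₁) / (x - e₂)`, which equals
`1 + (u - 1) / r`, lies in `u U_{n+1}`, so that `χ(x - e₁)` and `χ(x - e₂)` differ by `χ(u) = 1`.
As `v(b) = v(e₁ - e₂) - n < v(e₂) + n`, the set `e₂ + b U₁` contains a coset `c U_n`, and one of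
the two elements `c`, `c u` has character `1`.
-/

namespace DValuation

section Valuation

variable {K : Type*} [Field K] (w : DValuation K)

lemma v_one : w.v 1 = 0 := by
  have h := w.v_mul (one_ne_zero (α := K)) one_ne_zero
  rw [mul_one] at h
  lia

lemma v_neg {x : K} (hx : x ≠ 0) : w.v (-x) = w.v x := by
  have h := w.v_mul (neg_ne_zero.mpr hx) (neg_ne_zero.mpr hx)
  rw [neg_mul_neg, w.v_mul hx hx] at h
  lia

lemma v_sub_comm (x y : K) : w.v (x - y) = w.v (y - x) := by
  obtain rfl | hxy := eq_or_ne x y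
  · rfl
  · rw [← neg_sub, w.v_neg (sub_ne_zero.mpr hxy.symm)]

lemma v_div {x y : K} (hx : x ≠ 0) (hy : y ≠ 0) : w.v (x / y) = w.v x - w.v y := by
  have h := w.v_mul (div_ne_zero hx hy) hy
  rw [div_mul_cancel₀ _ hy] at h
  lia

variable {w} {m n : ℤ} {a b r s u : K}

lemma isUnit₁_one : w.IsUnit₁ m 1 := Or.inl rfl

lemma IsUnit₁.add (hu : w.IsUnit₁ m u) (hs : m ≤ w.v s) : w.IsUnit₁ m (u + s) := by
  obtain rfl | hu1 := eq_or_ne u 1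
  · exact Or.inr (by rwa [add_sub_cancel_left])
  have hu := hu.resolve_left hu1
  by_cases hus : u + s = 1
  · exact Or.inl hus
  obtain rfl | hs0 := eq_or_ne s 0
  · exact Or.inr (by rwa [add_zero])
  have hsum : u - 1 + s = u + s - 1 := by ring
  have hmin := w.min_le_v_add (sub_ne_zero.mpr hu1) hs0 (hsum ▸ sub_ne_zero.mpr hus)
  rw [hsum] at hmin
  exact Or.inr ((le_min hu hs).trans hmin)

lemma IsUnit₁.ne_zero (hm : 1 ≤ m) (hu : w.IsUnit₁ m u) : u ≠ 0 := by
  rintro rfl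
  obtain h | h := hu
  · exact zero_ne_one h
  · rw [zero_sub, w.v_neg one_ne_zero, w.v_one] at h
    lia

lemma IsUnit₁.v_eq_zero (hm : 1 ≤ m) (hu : w.IsUnit₁ m u) : w.v u = 0 := by
  have hu0 := hu.ne_zero hm
  obtain rfl | hu1 := eq_or_ne u 1
  · exact w.v_one
  have ht := sub_ne_zero.mpr hu1
  have hvt := hu.resolve_left hu1
  have hge := w.min_le_v_add one_ne_zero ht (by rwa [add_sub_cancel])
  have hle := w.min_le_v_add hu0 (neg_ne_zero.mpr ht) (by simp)
  rw [add_sub_cancel, w.v_one] at hge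
  rw [w.v_neg ht, ← sub_eq_add_neg, sub_sub_cancel, w.v_one] at hle
  lia

lemma IsUnit₁.one_add_sub_one_div_div (hn : 1 ≤ n) (hm : 1 ≤ m)
    (hu : w.IsUnit₁ n u) (hr : w.IsUnit₁ m r) : w.IsUnit₁ (n + m) ((1 + (u - 1) / r) / u) := by
  have hu0 := hu.ne_zero hn
  have hr0 := hr.ne_zero hm
  obtain rfl | hu1 := eq_or_ne u 1
  · exact Or.inl (by simp)
  obtain rfl | hr1 := eq_or_ne r 1
  · exact Or.inl (by simp [hu0])
  have ht := sub_ne_zero.mpr hu1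
  have hs := sub_ne_zero.mpr hr1
  have hsub : (1 + (u - 1) / r) / u - 1 = -((u - 1) * (r - 1) / (r * u)) := by
    field_simp
    ring
  refine Or.inr ?_
  rw [hsub, w.v_neg (div_ne_zero (mul_ne_zero ht hs) (mul_ne_zero hr0 hu0)),
    w.v_div (mul_ne_zero ht hs) (mul_ne_zero hr0 hu0), w.v_mul ht hs, w.v_mul hr0 hu0,
    hr.v_eq_zero hm, hu.v_eq_zero hn]
  have := hu.resolve_left hu1
  have := hr.resolve_left hr1
  lia

lemma IsUnit₁.one_add_sub_one_div_ne_zero (hn : 1 ≤ n) (hm : 1 ≤ m)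
    (hu : w.IsUnit₁ n u) (hr : w.IsUnit₁ m r) : 1 + (u - 1) / r ≠ 0 :=
  (div_ne_zero_iff.mp ((hu.one_add_sub_one_div_div hn hm hr).ne_zero (by lia))).1

lemma exists_isUnit₁_sub_div_of_v_lt (hn : 1 ≤ n) (ha : a ≠ 0) (hb : b ≠ 0)
    (hab : w.v b < w.v a + n) :
    ∃ c ≠ 0, w.v b < w.v c + n ∧ w.IsUnit₁ 1 ((c - a) / b) := by
  by_cases h0 : a + b = 0
  · obtain ⟨c, hc0, hvc⟩ := w.v_surj (w.v b + 1)
    refine ⟨c, hc0, by lia, ?_⟩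
    have hdiv : (c - a) / b = 1 + c / b := by
      rw [eq_neg_of_add_eq_zero_left h0]
      field_simp
      ring
    rw [hdiv]
    exact isUnit₁_one.add (by rw [w.v_div hc0 hb]; lia)
  · have hmin := w.min_le_v_add ha hb h0
    exact ⟨a + b, h0, by lia, Or.inl (by rw [add_sub_cancel_left, div_self hb])⟩

lemma exists_forall_isUnit₁_mul_eq_add_mul (hn : 1 ≤ n) (ha : a ≠ 0) (hb : b ≠ 0)
    (hab : w.v b < w.v a + n) :
    ∃ c ≠ 0, ∀ u, w.IsUnit₁ n u → ∃ r, w.IsUnit₁ 1 r ∧ a + b * r = c * u := by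
  obtain ⟨c, hc0, hbc, hr⟩ := exists_isUnit₁_sub_div_of_v_lt hn ha hb hab
  refine ⟨c, hc0, fun u hu ↦ ?_⟩
  obtain rfl | hu1 := eq_or_ne u 1
  · exact ⟨(c - a) / b, hr, by field_simp; ring⟩
  have ht := sub_ne_zero.mpr hu1
  refine ⟨(c - a) / b + c * (u - 1) / b, hr.add ?_, by field_simp; ring⟩
  rw [w.v_div (mul_ne_zero hc0 ht) hb, w.v_mul hc0 ht]
  have := hu.resolve_left hu1
  lia

end Valuation

section Character

variable {K : Type*} [Field K] {w : DValuation K} {χ : K → ZMod 2} {m n : ℤ} {a b r u : K}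

lemma exists_isUnit₁_v_sub_one_eq (hvan : ∀ u, w.IsUnit₁ (n + 1) u → χ u = 0)
    (hnonvan : ∃ u, w.IsUnit₁ n u ∧ χ u ≠ 0) :
    ∃ u ≠ 1, w.IsUnit₁ n u ∧ w.v (u - 1) = n ∧ χ u = 1 := by
  obtain ⟨u, hu, hχu⟩ := hnonvan
  have hu1 : u ≠ 1 := fun h ↦ hχu (hvan u (Or.inl h))
  have hlt : ¬ n + 1 ≤ w.v (u - 1) := fun h ↦ hχu (hvan u (Or.inr h))
  have := hu.resolve_left hu1
  exact ⟨u, hu1, hu, by lia, Fin.eq_one_of_ne_zero _ hχu⟩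

lemma char_one_add_sub_one_div {A : Type*} [AddMonoid A] {χ : K → A}
    (hχ : ∀ ⦃x y : K⦄, x ≠ 0 → y ≠ 0 → χ (x * y) = χ x + χ y) (hn : 1 ≤ n) (hm : 1 ≤ m)
    (hvan : ∀ u, w.IsUnit₁ (n + m) u → χ u = 0) (hu : w.IsUnit₁ n u) (hr : w.IsUnit₁ m r) :
    χ (1 + (u - 1) / r) = χ u := by
  have hu0 := hu.ne_zero hn
  have hq := hu.one_add_sub_one_div_div hn hm hr
  rw [← div_mul_cancel₀ (1 + (u - 1) / r) hu0, hχ (hq.ne_zero (by lia)) hu0, hvan _ hq, zero_add]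

lemma char_add_mul_sub_eq {A : Type*} [AddMonoid A] {χ : K → A}
    (hχ : ∀ ⦃x y : K⦄, x ≠ 0 → y ≠ 0 → χ (x * y) = χ x + χ y) (hn : 1 ≤ n) (hm : 1 ≤ m)
    (hvan : ∀ u, w.IsUnit₁ (n + m) u → χ u = 0) (hu : w.IsUnit₁ n u) (hr : w.IsUnit₁ m r)
    (hb : b ≠ 0) {e₁ e₂ : K} (he : b * (u - 1) = e₂ - e₁) :
    e₂ + b * r ≠ e₁ ∧ χ (e₂ + b * r - e₁) = χ (e₂ + b * r - e₂) + χ u := by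
  have hr0 := hr.ne_zero hm
  have hq := hu.one_add_sub_one_div_ne_zero hn hm hr
  have hfac : e₂ + b * r - e₁ = b * r * (1 + (u - 1) / r) := by
    field_simp
    linear_combination -he
  refine ⟨sub_ne_zero.mp (hfac ▸ mul_ne_zero (mul_ne_zero hb hr0) hq), ?_⟩
  rw [hfac, hχ (mul_ne_zero hb hr0) hq, char_one_add_sub_one_div hχ hn hm hvan hu hr,
    add_sub_cancel_left]

lemma exists_isUnit₁_char_add_mul_eq_one
    (hχ : ∀ ⦃x y : K⦄, x ≠ 0 → y ≠ 0 → χ (x * y) = χ x + χ y)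
    (hn : 1 ≤ n) (hu : w.IsUnit₁ n u) (hχu : χ u = 1)
    (ha : a ≠ 0) (hb : b ≠ 0) (hab : w.v b < w.v a + n) :
    ∃ r, w.IsUnit₁ 1 r ∧ a + b * r ≠ 0 ∧ χ (a + b * r) = 1 := by
  obtain ⟨c, hc0, hc⟩ := exists_forall_isUnit₁_mul_eq_add_mul hn ha hb hab
  by_cases hχc : χ c = 0
  · obtain ⟨r, hr, hrc⟩ := hc u hu
    have hu0 := hu.ne_zero hn
    exact ⟨r, hr, hrc ▸ mul_ne_zero hc0 hu0, by rw [hrc, hχ hc0 hu0, hχc, hχu, zero_add]⟩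
  · obtain ⟨r, hr, hrc⟩ := hc 1 isUnit₁_one
    rw [mul_one] at hrc
    exact ⟨r, hr, hrc ▸ hc0, hrc ▸ Fin.eq_one_of_ne_zero _ hχc⟩

end Character

end DValuation

open DValuation in
theorem chatelet_case_iii_small_valuation_general {K : Type*} [Field K] {w : DValuation K}
    {χ : K → ZMod 2} (hχ : ∀ ⦃x y : K⦄, x ≠ 0 → y ≠ 0 → χ (x * y) = χ x + χ y)
    {n : ℤ} (hn : 1 ≤ n) (hvan : ∀ u, w.IsUnit₁ (n + 1) u → χ u = 0)
    (hnonvan : ∃ u, w.IsUnit₁ n u ∧ χ u ≠ 0)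
    {e₁ e₂ : K} (he₂ : e₂ ≠ 0) (hee : e₁ ≠ e₂) (hval : w.v (e₁ - e₂) ≤ w.v e₂ + 2 * n - 1) :
    ∃ x : K, x ≠ 0 ∧ x ≠ e₁ ∧ x ≠ e₂ ∧
      χ x = 1 ∧ χ (x - e₁) + χ (x - e₂) = 1 ∧
      χ (x * (x - e₁) * (x - e₂)) = 0 := by
  obtain ⟨u, hu1, hu, hvu, hχu⟩ := exists_isUnit₁_v_sub_one_eq hvan hnonvan
  have ht : u - 1 ≠ 0 := sub_ne_zero.mpr hu1
  have hd : e₂ - e₁ ≠ 0 := sub_ne_zero.mpr hee.symm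
  obtain ⟨b, hb⟩ : ∃ b, b = (e₂ - e₁) / (u - 1) := ⟨_, rfl⟩
  have hb0 : b ≠ 0 := hb ▸ div_ne_zero hd ht
  have hvb : w.v b = w.v (e₁ - e₂) - n := by rw [hb, w.v_div hd ht, hvu, w.v_sub_comm]
  obtain ⟨r, hr, hx, hχx⟩ := exists_isUnit₁_char_add_mul_eq_one hχ hn hu hχu he₂ hb0 (by lia)
  obtain ⟨hx₁, hχsub⟩ := char_add_mul_sub_eq hχ hn le_rfl hvan hu hr hb0
    (by rw [hb, div_mul_cancel₀ _ ht])
  have hx₂ : e₂ + b * r ≠ e₂ := by simpa using ⟨hb0, hr.ne_zero le_rfl⟩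
  have hsum : χ (e₂ + b * r - e₁) + χ (e₂ + b * r - e₂) = 1 := by
    rw [hχsub, hχu, add_right_comm, CharTwo.add_self_eq_zero, zero_add]
  refine ⟨e₂ + b * r, hx, hx₁, hx₂, hχx, hsum, ?_⟩
  rw [hχ (mul_ne_zero hx (sub_ne_zero.mpr hx₁)) (sub_ne_zero.mpr hx₂),
    hχ hx (sub_ne_zero.mpr hx₁), add_assoc, hsum, hχx, CharTwo.add_self_eq_zero]

/-- The construction in case (iii) of Proposition 4 when
`1 ≤ v(e₁−e₂) ≤ 2n−1`:  `χ : K^× → ℤ/2ℤ` a homomorphism vanishing on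
`U_{n+1}` but not identically on `U_n` (`n ≥ 1`); `e₁, e₂` distinct `1`-units
with `1 ≤ v(e₁−e₂) ≤ 2n−1` and `χ(e₁) = χ(e₂) = 0`.  Then there is
`x ∈ K ∖ {0, e₁, e₂}` with `χ(x) = 1` and `χ(x−e₁) + χ(x−e₂) = 1`; in
particular `χ(x(x−e₁)(x−e₂)) = 0`. -/
theorem chatelet_case_iii_small_valuation
    (K : Type*) [Field K] [Algebra ℚ_[2] K] [FiniteDimensional ℚ_[2] K]
    (w : DValuation K)
    (hext : ∀ x : ℚ_[2], x ≠ 0 →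
      w.v (algebraMap ℚ_[2] K x) = w.v (algebraMap ℚ_[2] K 2) * x.valuation)
    (χ : K → ZMod 2)
    (hχ : ∀ ⦃x y : K⦄, x ≠ 0 → y ≠ 0 → χ (x * y) = χ x + χ y)
    (n : ℕ) (hn : 1 ≤ n)
    (hvan : ∀ u : K, w.IsUnit₁ ((n : ℤ) + 1) u → χ u = 0)
    (hnonvan : ∃ u : K, w.IsUnit₁ (n : ℤ) u ∧ χ u ≠ 0)
    (e₁ e₂ : K) (he₁ : w.IsUnit₁ 1 e₁) (he₂ : w.IsUnit₁ 1 e₂) (hee : e₁ ≠ e₂)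
    (hval₁ : 1 ≤ w.v (e₁ - e₂)) (hval₂ : w.v (e₁ - e₂) ≤ 2 * (n : ℤ) - 1)
    (hχe₁ : χ e₁ = 0) (hχe₂ : χ e₂ = 0) :
    ∃ x : K, x ≠ 0 ∧ x ≠ e₁ ∧ x ≠ e₂ ∧
      χ x = 1 ∧ χ (x - e₁) + χ (x - e₂) = 1 ∧
      χ (x * (x - e₁) * (x - e₂)) = 0 := by
  exact chatelet_case_iii_small_valuation_general hχ (by exact_mod_cast hn) hvan hnonvan
    (he₂.ne_zero le_rfl) hee (by rw [he₂.v_eq_zero le_rfl]; lia)
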